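/- arXiv:2504.16299 — 2 statements merged into one kernel-verified Lean document; each statement's English description precedes it below -/
import Mathlib

section
/- Let ρ and σ be density matrices on ℂ^d and let m ≥ 1. For any d^m × d^m Hermitian matrix M such that both M and I − M are positive semidefinite (a binary POVM element on m copies), the sum of the two error probabilities of the corresponding quantum test satisfies Tr[ρ^{⊗m}(I − M)] + Tr[σ^{⊗m} M] ≥ (1/4)·F(ρ,σ)^m, where ρ^{⊗m} denotes the m-fold Kronecker power of ρ. -/
open Matrix MeasureTheory ProbabilityTheory
open scoped ComplexOrder

/-- The positive semidefinite square root of a positive semidefinite matrix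
(the definition of the older Mathlib, since removed). -/
noncomputable def Matrix.PosSemidef.sqrt {n 𝕜 : Type*} [Fintype n] [RCLike 𝕜] [DecidableEq n]
    {A : Matrix n n 𝕜} (hA : A.PosSemidef) : Matrix n n 𝕜 :=
  hA.1.eigenvectorUnitary.1 * diagonal ((↑) ∘ Real.sqrt ∘ hA.1.eigenvalues) *
    (star hA.1.eigenvectorUnitary : Matrix n n 𝕜)

/-- The positive semidefinite square root of a matrix (junk value `0` if the matrix is not
positive semidefinite). -/
noncomputable def matSqrt {d : ℕ} (A : Matrix (Fin d) (Fin d) ℂ) : Matrix (Fin d) (Fin d) ℂ :=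
  open scoped Classical in
  if h : A.PosSemidef then h.sqrt else 0

/-- The quantum fidelity `F(ρ,σ) = (Tr[√(√σ ρ √σ)])²`. -/
noncomputable def fidelity {d : ℕ} (ρ σ : Matrix (Fin d) (Fin d) ℂ) : ℝ :=
  ((matSqrt (matSqrt σ * ρ * matSqrt σ)).trace.re) ^ 2

/-- The trace norm `‖A‖₁ = Tr[√(A†A)]`. -/
noncomputable def traceNorm {d : ℕ} (A : Matrix (Fin d) (Fin d) ℂ) : ℝ :=
  (matSqrt (Aᴴ * A)).trace.re

/-- The `m`-fold Kronecker (tensor) power of a `d × d` matrix. -/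
noncomputable def kronPow {d : ℕ} (A : Matrix (Fin d) (Fin d) ℂ) :
    (m : ℕ) → Matrix (Fin (d ^ m)) (Fin (d ^ m)) ℂ
  | 0 => 1
  | m + 1 =>
      Matrix.reindex (finProdFinEquiv.trans (finCongr (pow_succ d m).symm))
        (finProdFinEquiv.trans (finCongr (pow_succ d m).symm))
        (Matrix.kroneckerMap (· * ·) (kronPow A m) A)

/-!
The fidelity is at most the classical fidelity of the outcome distributions of any measurement:
`√F(ρ, σ) = Tr |√ρ √σ| ≤ ∑ᵢ √Tr[ρ Mᵢ] √Tr[σ Mᵢ]` for every POVM `(Mᵢ)`. Indeed `|√ρ √σ| = U √ρ √σ`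
for a partial isometry `U`; insert `1 = ∑ᵢ Mᵢ` between the two roots and apply Cauchy–Schwarz to
each form `(X, Y) ↦ Tr[X Mᵢ Y†]`. For the test `{M, 1 - M}` with total error `e`, a second
application of Cauchy–Schwarz, pairing the two error probabilities with the two success
probabilities, gives `F(ρ, σ) ≤ e (Tr ρ + Tr σ - e)`. Finally `F` is multiplicative under tensor
powers, because square roots are, and for states `F ^ m ≤ e (2 - e) ≤ 2 e`.
-/

open scoped MatrixOrder

section TraceInequalities

variable {n 𝕜 : Type*} [Fintype n] [RCLike 𝕜]

lemma trace_mul_nonneg {P Q : Matrix n n 𝕜} (hP : P.PosSemidef) (hQ : Q.PosSemidef) :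
    0 ≤ (P * Q).trace := by
  classical
  obtain ⟨B, rfl⟩ := CStarAlgebra.nonneg_iff_eq_star_mul_self.mp hQ.nonneg
  rw [star_eq_conjTranspose, ← Matrix.mul_assoc, trace_mul_comm, ← Matrix.mul_assoc]
  exact (hP.mul_mul_conjTranspose_same B).trace_nonneg

lemma trace_mul_le_trace [DecidableEq n] {P Q : Matrix n n 𝕜} (hP : P.PosSemidef)
    (hQ : Q ≤ 1) : (P * Q).trace ≤ P.trace := by
  have h : 0 ≤ (P * (1 - Q)).trace := trace_mul_nonneg hP hQ
  rwa [Matrix.mul_sub, Matrix.mul_one, trace_sub, sub_nonneg] at h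

lemma norm_trace_mul_mul_conjTranspose_le {M : Matrix n n 𝕜} (hM : M.PosSemidef)
    (X Y : Matrix n n 𝕜) :
    ‖(X * M * Yᴴ).trace‖ ≤
      √(RCLike.re (X * M * Xᴴ).trace) * √(RCLike.re (Y * M * Yᴴ).trace) := by
  let := M.toMatrixSeminormedAddCommGroup hM
  let := M.toMatrixInnerProductSpace hM
  have h : ‖inner 𝕜 Y X‖ ≤ ‖X‖ * ‖Y‖ := by
    rw [mul_comm]
    exact norm_inner_le_norm Y X
  rwa [norm_eq_sqrt_re_inner (𝕜 := 𝕜) X, norm_eq_sqrt_re_inner (𝕜 := 𝕜) Y] at h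

end TraceInequalities

section TraceAbs

variable {n 𝕜 : Type*} [Fintype n] [RCLike 𝕜]

lemma exists_isSelfAdjoint_pseudoinverse {T : Matrix n n 𝕜} (hT : IsSelfAdjoint T) :
    ∃ E : Matrix n n 𝕜, IsSelfAdjoint E ∧ E * (T * T) = T ∧ T * (E * E) = E := by
  classical
  have hcont (f : ℝ → ℝ) : ContinuousOn f (spectrum ℝ T) := T.finite_real_spectrum.continuousOn f
  have hE : cfc (fun x : ℝ ↦ x) T = T := cfc_id' ℝ T
  refine ⟨cfc (fun x : ℝ ↦ x⁻¹) T, cfc_predicate _ _, ?_, ?_⟩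
  · nth_rw 2 3 4 [← hE]
    rw [← Matrix.mul_assoc, ← cfc_mul _ _ T (hcont _) (hcont _),
      ← cfc_mul _ _ T (hcont _) (hcont _)]
    simp only [inv_mul_mul_self]
  · nth_rw 1 [← hE]
    rw [← Matrix.mul_assoc, ← cfc_mul _ _ T (hcont _) (hcont _),
      ← cfc_mul _ _ T (hcont _) (hcont _)]
    exact cfc_congr fun x _ ↦ by simpa only [inv_inv] using inv_mul_mul_self x⁻¹

variable [DecidableEq n]

lemma exists_isStarProjection_mul_eq_abs (C : Matrix n n 𝕜) :
    ∃ U : Matrix n n 𝕜, IsStarProjection (Uᴴ * U) ∧ U * C = CFC.abs C := by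
  set T := CFC.abs C
  have hTT : T * T = Cᴴ * C := CFC.abs_mul_abs C
  obtain ⟨E, hE, hETT, hTEE⟩ := exists_isSelfAdjoint_pseudoinverse (CFC.abs_nonneg C).isSelfAdjoint
  -- `C E` is the isometric factor of the polar decomposition `C = (C E) |C|`; `U` is its adjoint.
  refine ⟨E * Cᴴ, ⟨?_, isHermitian_conjTranspose_mul_self _⟩, ?_⟩
  · have hU : (E * Cᴴ)ᴴ = C * E := by
      rw [conjTranspose_mul, conjTranspose_conjTranspose, ← star_eq_conjTranspose, hE.star_eq]
    rw [IsIdempotentElem, hU]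
    calc C * E * (E * Cᴴ) * (C * E * (E * Cᴴ))
        = C * E * (E * (T * T)) * (E * E) * Cᴴ := by simp only [hTT, Matrix.mul_assoc]
      _ = C * E * E * Cᴴ := by rw [hETT, Matrix.mul_assoc (C * E), hTEE]
      _ = C * E * (E * Cᴴ) := Matrix.mul_assoc _ _ _
  · rw [Matrix.mul_assoc, ← hTT, hETT]

lemma re_trace_abs_mul_le_sum {ι : Type*} [Fintype ι] (A B : Matrix n n 𝕜)
    {M : ι → Matrix n n 𝕜} (hM : ∀ i, (M i).PosSemidef) (hsum : ∑ i, M i = 1) :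
    RCLike.re (CFC.abs (A * B)).trace ≤
      ∑ i, √(RCLike.re (A * M i * Aᴴ).trace) * √(RCLike.re (Bᴴ * M i * B).trace) := by
  obtain ⟨U, hU, hUAB⟩ := exists_isStarProjection_mul_eq_abs (A * B)
  have hcontract (i : ι) : (U * A * M i * (U * A)ᴴ).trace ≤ (A * M i * Aᴴ).trace := by
    have hcycle : (U * A * M i * (U * A)ᴴ).trace = (A * M i * Aᴴ * (Uᴴ * U)).trace := by
      rw [conjTranspose_mul, ← Matrix.mul_assoc _ Uᴴ U, trace_mul_comm _ U]
      simp only [Matrix.mul_assoc]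
    rw [hcycle]
    exact trace_mul_le_trace ((hM i).mul_mul_conjTranspose_same A) hU.le_one
  have hsplit : CFC.abs (A * B) = ∑ i, U * A * M i * B := by
    rw [← Finset.sum_mul, ← Finset.mul_sum, hsum, Matrix.mul_one, Matrix.mul_assoc, hUAB]
  rw [hsplit, trace_sum, map_sum]
  refine Finset.sum_le_sum fun i _ ↦ ?_
  calc RCLike.re (U * A * M i * B).trace
      ≤ ‖(U * A * M i * B).trace‖ := RCLike.re_le_norm _
    _ ≤ √(RCLike.re (U * A * M i * (U * A)ᴴ).trace) * √(RCLike.re (Bᴴ * M i * B).trace) := by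
      simpa only [conjTranspose_conjTranspose] using
        norm_trace_mul_mul_conjTranspose_le (hM i) (U * A) Bᴴ
    _ ≤ √(RCLike.re (A * M i * Aᴴ).trace) * √(RCLike.re (Bᴴ * M i * B).trace) := by
      gcongr ?_ * _
      exact Real.sqrt_le_sqrt (RCLike.le_iff_re_im.mp (hcontract i)).1

end TraceAbs

section KronPow

variable {d : ℕ}

lemma kronPow_mul (A B : Matrix (Fin d) (Fin d) ℂ) (m : ℕ) :
    kronPow (A * B) m = kronPow A m * kronPow B m := by
  induction m with
  | zero => exact (Matrix.mul_one _).symm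
  | succ m ih =>
    simp only [kronPow, ih, reindex_apply, submatrix_mul_equiv]
    exact congrArg (submatrix · _ _) (mul_kronecker_mul _ _ _ _)

lemma trace_kronPow (A : Matrix (Fin d) (Fin d) ℂ) (m : ℕ) :
    (kronPow A m).trace = A.trace ^ m := by
  induction m with
  | zero => exact (trace_one (n := Fin (d ^ 0))).trans (by simp)
  | succ m ih =>
    rw [pow_succ A.trace, ← ih, ← trace_kronecker]
    exact Equiv.sum_comp (finProdFinEquiv.trans (finCongr (pow_succ d m).symm)).symm
      fun i ↦ (kronPow A m).kronecker A i i

lemma re_trace_kronPow {A : Matrix (Fin d) (Fin d) ℂ} (hA : A.PosSemidef) (m : ℕ) :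
    (kronPow A m).trace.re = A.trace.re ^ m := by
  obtain ⟨x, -, hx⟩ := RCLike.nonneg_iff_exists_ofReal.mp hA.trace_nonneg
  rw [trace_kronPow, ← hx]
  norm_cast

lemma posSemidef_kronPow {A : Matrix (Fin d) (Fin d) ℂ} (hA : A.PosSemidef) (m : ℕ) :
    (kronPow A m).PosSemidef := by
  induction m with
  | zero => exact .one
  | succ m ih => exact (ih.kronecker hA).submatrix _

end KronPow

section Fidelity

variable {d : ℕ} {A ρ σ : Matrix (Fin d) (Fin d) ℂ}

lemma matSqrt_eq_cfcSqrt (hA : A.PosSemidef) : matSqrt A = CFC.sqrt A := by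
  rw [matSqrt, dif_pos hA, CFC.sqrt_eq_real_sqrt A hA.nonneg, cfcₙ_eq_cfc, hA.1.cfc_eq,
    IsHermitian.cfc, Unitary.conjStarAlgAut_apply]
  rfl

lemma posSemidef_matSqrt (hA : A.PosSemidef) : (matSqrt A).PosSemidef := by
  rw [matSqrt_eq_cfcSqrt hA]
  exact (CFC.sqrt_nonneg A).posSemidef

lemma matSqrt_mul_self (hA : A.PosSemidef) : matSqrt A * matSqrt A = A := by
  rw [matSqrt_eq_cfcSqrt hA]
  exact CFC.sqrt_mul_sqrt_self A hA.nonneg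

lemma matSqrt_kronPow (hA : A.PosSemidef) (m : ℕ) :
    matSqrt (kronPow A m) = kronPow (matSqrt A) m := by
  rw [matSqrt_eq_cfcSqrt (posSemidef_kronPow hA m)]
  refine CFC.sqrt_unique ?_ (posSemidef_kronPow (posSemidef_matSqrt hA) m).nonneg
  rw [← kronPow_mul, matSqrt_mul_self hA]

lemma posSemidef_matSqrt_mul_mul_matSqrt (hρ : ρ.PosSemidef) (hσ : σ.PosSemidef) :
    (matSqrt σ * ρ * matSqrt σ).PosSemidef := by
  simpa only [(posSemidef_matSqrt hσ).1.eq] using hρ.mul_mul_conjTranspose_same (matSqrt σ)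

lemma fidelity_kronPow (hρ : ρ.PosSemidef) (hσ : σ.PosSemidef) (m : ℕ) :
    fidelity (kronPow ρ m) (kronPow σ m) = fidelity ρ σ ^ m := by
  have hP := posSemidef_matSqrt_mul_mul_matSqrt hρ hσ
  rw [fidelity, fidelity, matSqrt_kronPow hσ, ← kronPow_mul, ← kronPow_mul, matSqrt_kronPow hP,
    re_trace_kronPow (posSemidef_matSqrt hP), pow_right_comm]

lemma fidelity_eq_sq_re_trace_abs (hρ : ρ.PosSemidef) (hσ : σ.PosSemidef) :
    fidelity ρ σ = (CFC.abs (matSqrt ρ * matSqrt σ)).trace.re ^ 2 := by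
  have h : matSqrt σ * ρ * matSqrt σ =
      star (matSqrt ρ * matSqrt σ) * (matSqrt ρ * matSqrt σ) := by
    nth_rw 1 [← matSqrt_mul_self hρ]
    rw [star_eq_conjTranspose, conjTranspose_mul, (posSemidef_matSqrt hρ).1.eq,
      (posSemidef_matSqrt hσ).1.eq]
    simp only [Matrix.mul_assoc]
  rw [fidelity, matSqrt_eq_cfcSqrt (posSemidef_matSqrt_mul_mul_matSqrt hρ hσ), h, CFC.abs]

lemma fidelity_le_sq_sum_sqrt_trace_mul {ι : Type*} [Fintype ι]
    {M : ι → Matrix (Fin d) (Fin d) ℂ} (hρ : ρ.PosSemidef) (hσ : σ.PosSemidef)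
    (hM : ∀ i, (M i).PosSemidef) (hsum : ∑ i, M i = 1) :
    fidelity ρ σ ≤ (∑ i, √(ρ * M i).trace.re * √(σ * M i).trace.re) ^ 2 := by
  have htrace {τ : Matrix (Fin d) (Fin d) ℂ} (hτ : τ.PosSemidef) (i : ι) :
      (matSqrt τ * M i * matSqrt τ).trace = (τ * M i).trace := by
    rw [trace_mul_comm, ← Matrix.mul_assoc, matSqrt_mul_self hτ]
  rw [fidelity_eq_sq_re_trace_abs hρ hσ]
  refine pow_le_pow_left₀ ?_ ?_ 2
  · exact (Complex.nonneg_iff.mp (CFC.abs_nonneg _).posSemidef.trace_nonneg).1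
  · have h := re_trace_abs_mul_le_sum (matSqrt ρ) (matSqrt σ) hM hsum
    simpa only [(posSemidef_matSqrt hρ).1.eq, (posSemidef_matSqrt hσ).1.eq, htrace hρ,
      htrace hσ, RCLike.re_eq_complex_re] using h

end Fidelity

/-- The total error `α + β` of the binary test `{M, 1 - M}` between `ρ` and `σ`, where the outcome
`M` is read as a decision for `ρ`. -/
noncomputable def totalError {n : Type*} [Fintype n] [DecidableEq n] (ρ σ M : Matrix n n ℂ) : ℝ :=
  (ρ * (1 - M)).trace.re + (σ * M).trace.re

lemma sq_sqrt_mul_sqrt_add_le {a b c d : ℝ} (ha : 0 ≤ a) (hb : 0 ≤ b) (hc : 0 ≤ c)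
    (hd : 0 ≤ d) : (√a * √b + √c * √d) ^ 2 ≤ (c + b) * (a + d) := by
  have h : 0 ≤ (√a * √c - √b * √d) ^ 2 := sq_nonneg _
  calc (√a * √b + √c * √d) ^ 2
      ≤ (√c ^ 2 + √b ^ 2) * (√a ^ 2 + √d ^ 2) := by linarith
    _ = (c + b) * (a + d) := by
        rw [Real.sq_sqrt ha, Real.sq_sqrt hb, Real.sq_sqrt hc, Real.sq_sqrt hd]

theorem fidelity_le_totalError_mul {d : ℕ} {ρ σ M : Matrix (Fin d) (Fin d) ℂ}
    (hρ : ρ.PosSemidef) (hσ : σ.PosSemidef) (hM : M.PosSemidef) (hIM : (1 - M).PosSemidef) :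
    fidelity ρ σ ≤
      totalError ρ σ M * (ρ.trace.re + σ.trace.re - totalError ρ σ M) := by
  have hcompl (τ : Matrix (Fin d) (Fin d) ℂ) :
      τ.trace.re = (τ * M).trace.re + (τ * (1 - M)).trace.re := by
    rw [← Complex.add_re, ← trace_add, ← Matrix.mul_add, add_sub_cancel, Matrix.mul_one]
  have hnonneg {τ N : Matrix (Fin d) (Fin d) ℂ} (hτ : τ.PosSemidef) (hN : N.PosSemidef) :
      0 ≤ (τ * N).trace.re :=
    (Complex.nonneg_iff.mp (trace_mul_nonneg hτ hN)).1
  calc fidelity ρ σ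
      ≤ (√(ρ * M).trace.re * √(σ * M).trace.re +
          √(ρ * (1 - M)).trace.re * √(σ * (1 - M)).trace.re) ^ 2 := by
        simpa only [Fintype.sum_bool, cond_true, cond_false] using
          fidelity_le_sq_sum_sqrt_trace_mul (M := fun b ↦ bif b then M else 1 - M) hρ hσ
            (Bool.rec hIM hM) (by simp)
    _ ≤ ((ρ * (1 - M)).trace.re + (σ * M).trace.re) *
          ((ρ * M).trace.re + (σ * (1 - M)).trace.re) :=
        sq_sqrt_mul_sqrt_add_le (hnonneg hρ hM) (hnonneg hσ hM) (hnonneg hρ hIM) (hnonneg hσ hIM)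
    _ = totalError ρ σ M * (ρ.trace.re + σ.trace.re - totalError ρ σ M) := by
        rw [totalError, hcompl ρ, hcompl σ]
        ring

theorem total_error_lower_bound_general {d : ℕ} {ρ σ : Matrix (Fin d) (Fin d) ℂ}
    (hρ : ρ.PosSemidef) (hσ : σ.PosSemidef) (m : ℕ)
    {M : Matrix (Fin (d ^ m)) (Fin (d ^ m)) ℂ} (hM : M.PosSemidef) (hIM : (1 - M).PosSemidef) :
    fidelity ρ σ ^ m ≤ totalError (kronPow ρ m) (kronPow σ m) M *
      (ρ.trace.re ^ m + σ.trace.re ^ m - totalError (kronPow ρ m) (kronPow σ m) M) := by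
  have h := fidelity_le_totalError_mul (posSemidef_kronPow hρ m) (posSemidef_kronPow hσ m) hM hIM
  rwa [fidelity_kronPow hρ hσ, re_trace_kronPow hρ, re_trace_kronPow hσ] at h

/-- Lower bound on total error of any binary quantum test on `m` copies:
`Tr[ρ^{⊗m}(I−M)] + Tr[σ^{⊗m} M] ≥ (1/4)·F(ρ,σ)^m`. -/
theorem total_error_lower_bound {d : ℕ}
    (ρ σ : Matrix (Fin d) (Fin d) ℂ)
    (hρ : ρ.PosSemidef) (hρtr : ρ.trace = 1)
    (hσ : σ.PosSemidef) (hσtr : σ.trace = 1)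
    (m : ℕ) (hm : 1 ≤ m)
    (M : Matrix (Fin (d ^ m)) (Fin (d ^ m)) ℂ)
    (hMH : M.IsHermitian) (hM : M.PosSemidef) (hIM : (1 - M).PosSemidef) :
    ((kronPow ρ m) * (1 - M)).trace.re + ((kronPow σ m) * M).trace.re ≥
      (1 / 4) * (fidelity ρ σ) ^ m := by
  have h := total_error_lower_bound_general hρ hσ m hM hIM
  have hF : 0 ≤ fidelity ρ σ ^ m := pow_nonneg (sq_nonneg _) m
  rw [hρtr, hσtr, Complex.one_re, one_pow] at h
  change 1 / 4 * fidelity ρ σ ^ m ≤ totalError (kronPow ρ m) (kronPow σ m) M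
  nlinarith [sq_nonneg (totalError (kronPow ρ m) (kronPow σ m) M)]
end

section
/- (Pauli operator concentration.) Let σ be a density matrix on ℂ². Let m = 3n with n ≥ 1, and for each K ∈ {X, Y, Z} let X_{K,1}, …, X_{K,n} be i.i.d. real random variables taking values in [−1, 1] with mean E[X_{K,ℓ}] = Tr[σ_K σ] (the true Bloch coordinate, a real number), the three families being mutually independent. Define the empirical Bloch coordinates r̂_K = (1/n)·Σ_{ℓ=1}^n X_{K,ℓ} and the reconstructed state σ̂ = (1/2)·(I₂ + r̂_X σ_X + r̂_Y σ_Y + r̂_Z σ_Z). Then for every ε > 0, ℙ(‖σ − σ̂‖₁ > ε) ≤ 6·exp(−m ε² / 54). -/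
open Matrix MeasureTheory ProbabilityTheory
open scoped ComplexOrder

/-- The three Pauli matrices `σ_X, σ_Y, σ_Z`. -/
noncomputable def pauli : Fin 3 → Matrix (Fin 2) (Fin 2) ℂ :=
  ![!![0, 1; 1, 0], !![0, -Complex.I; Complex.I, 0], !![1, 0; 0, -1]]

/-! The difference of two matrices `½ (1 + r · σ)` is `½ v · σ`, where `v` is the difference of the
Bloch vectors. As the Pauli matrices are Hermitian, anticommute and square to `1`, one has
`(v · σ)ᴴ (v · σ) = |v|² 1`, so the trace norm of `½ v · σ` is exactly the Euclidean norm of `v`. If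
this exceeds `ε`, then some coordinate of `v` exceeds `ε / √3` in absolute value. Hoeffding's
inequality bounds the probability of this by `2 exp (-n ε² / 6)` for each of the three coordinates,
and `n / 6 = m / 18 ≥ m / 54`. -/

theorem traceNorm_eq_sum_sqrt_eigenvalues {d : ℕ} (A : Matrix (Fin d) (Fin d) ℂ) :
    traceNorm A = ∑ i, √((isHermitian_conjTranspose_mul_self A).eigenvalues i) := by
  rw [traceNorm, matSqrt, dif_pos (posSemidef_conjTranspose_mul_self A), PosSemidef.sqrt,
    trace_mul_comm, ← mul_assoc, Unitary.coe_star_mul_self, one_mul, trace_diagonal]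
  simp

theorem eigenvalues_eq_of_eq_smul_one {ι 𝕜 : Type*} [RCLike 𝕜] [Fintype ι] [DecidableEq ι]
    {A : Matrix ι ι 𝕜} (hA : A.IsHermitian) {c : ℝ} (h : A = c • 1) (i : ι) :
    hA.eigenvalues i = c := by
  have : Nonempty ι := ⟨i⟩
  have hspec : spectrum ℝ A = {c} := by
    rw [h, ← Algebra.algebraMap_eq_smul_one, spectrum.scalar_eq]
  exact hspec.subset (hA.eigenvalues_mem_spectrum_real i)

theorem traceNorm_of_conjTranspose_mul_self_eq_smul_one {d : ℕ} {A : Matrix (Fin d) (Fin d) ℂ}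
    {c : ℝ} (h : Aᴴ * A = c • 1) : traceNorm A = d * √c := by
  simp [traceNorm_eq_sum_sqrt_eigenvalues, eigenvalues_eq_of_eq_smul_one _ h]

theorem sum_smul_pauli (v : Fin 3 → ℝ) :
    ∑ K, (v K : ℂ) • pauli K =
      !![(v 2 : ℂ), v 0 - v 1 * Complex.I; v 0 + v 1 * Complex.I, -v 2] := by
  ext i j
  fin_cases i <;> fin_cases j <;> simp [pauli, Fin.sum_univ_three, sub_eq_add_neg]

theorem conjTranspose_mul_self_sum_smul_pauli (v : Fin 3 → ℝ) :
    (∑ K, (v K : ℂ) • pauli K)ᴴ * ∑ K, (v K : ℂ) • pauli K = (∑ K, v K ^ 2) • 1 := by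
  rw [sum_smul_pauli, Fin.sum_univ_three]
  ext i j
  fin_cases i <;> fin_cases j <;> apply Complex.ext <;>
    simp [mul_apply, -Complex.ofReal_pow] <;> ring

/-- The matrix `½ (1 + r · σ)` with Bloch coordinates `r = (r_X, r_Y, r_Z)`. It is a density matrix
only for `|r| ≤ 1`, which is not imposed because empirical coordinates may violate it. -/
noncomputable def blochMatrix (r : Fin 3 → ℝ) : Matrix (Fin 2) (Fin 2) ℂ :=
  (1 / 2 : ℂ) • (1 + ∑ K, (r K : ℂ) • pauli K)

/-- The Bloch coordinates `Tr[σ_K A]` of a matrix `A`. The real part is taken to get real numbers;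
for Hermitian `A`, the case of interest, it changes nothing. -/
noncomputable def blochVector (A : Matrix (Fin 2) (Fin 2) ℂ) (K : Fin 3) : ℝ :=
  (pauli K * A).trace.re

theorem blochMatrix_blochVector {A : Matrix (Fin 2) (Fin 2) ℂ} (hA : A.IsHermitian)
    (htr : A.trace = 1) : blochMatrix (blochVector A) = A := by
  have h00 : (A 0 0).im = 0 := Complex.conj_eq_iff_im.1 (hA.apply 0 0)
  have h10 : A 1 0 = star (A 0 1) := (hA.apply 1 0).symm
  have h11 : A 1 1 = 1 - A 0 0 := eq_sub_of_add_eq' (A.trace_fin_two ▸ htr)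
  have hX : blochVector A 0 = 2 * (A 0 1).re := by
    simp [blochVector, pauli, trace_fin_two, vecMul, dotProduct, h10, two_mul]
  have hY : blochVector A 1 = -2 * (A 0 1).im := by
    simp [blochVector, pauli, trace_fin_two, vecMul, dotProduct, h10, two_mul, add_comm]
  have hZ : blochVector A 2 = 2 * (A 0 0).re - 1 := by
    simp [blochVector, pauli, trace_fin_two, vecMul, dotProduct, h11, two_mul, add_sub_assoc]
  rw [blochMatrix, sum_smul_pauli, hX, hY, hZ]
  ext i j
  fin_cases i <;> fin_cases j <;> apply Complex.ext <;> simp [h00, h10, h11]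
  ring

theorem traceNorm_blochMatrix_sub (r s : Fin 3 → ℝ) :
    traceNorm (blochMatrix r - blochMatrix s) = √(∑ K, (r K - s K) ^ 2) := by
  have hsub : blochMatrix r - blochMatrix s =
      ∑ K, (((r K - s K) / 2 : ℝ) : ℂ) • pauli K := by
    simp only [blochMatrix, ← smul_sub, add_sub_add_left_eq_sub, ← Finset.sum_sub_distrib,
      ← sub_smul, Finset.smul_sum, smul_smul, one_div_mul_eq_div, Complex.ofReal_div,
      Complex.ofReal_sub, Complex.ofReal_ofNat]
  rw [hsub, traceNorm_of_conjTranspose_mul_self_eq_smul_one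
    (conjTranspose_mul_self_sum_smul_pauli _)]
  simp only [div_pow, ← Finset.sum_div]
  rw [Real.sqrt_div' _ (by positivity), Real.sqrt_sq zero_le_two]
  exact mul_div_cancel₀ _ two_ne_zero

theorem exists_div_sqrt_card_lt_abs_of_lt_sqrt_sum_sq {ι : Type*} [Fintype ι] {v : ι → ℝ} {ε : ℝ}
    (hε : 0 ≤ ε) (h : ε < √(∑ i, v i ^ 2)) : ∃ i, ε / √(Fintype.card ι) < |v i| := by
  by_contra! hv
  refine h.not_ge (Real.sqrt_le_iff.2 ⟨hε, ?_⟩)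
  calc
    ∑ i, v i ^ 2 ≤ ∑ _ : ι, (ε / √(Fintype.card ι)) ^ 2 :=
      Finset.sum_le_sum fun i _ ↦ sq_le_sq.2 ((hv i).trans (le_abs_self _))
    _ = Fintype.card ι * (ε ^ 2 / Fintype.card ι) := by simp [div_pow]
    _ = ε ^ 2 * (Fintype.card ι / Fintype.card ι) := mul_div_left_comm _ _ _
    _ ≤ ε ^ 2 := mul_le_of_le_one_right (sq_nonneg ε) (div_self_le_one _)

section Hoeffding

variable {Ω : Type*} [MeasurableSpace Ω] {μ : Measure Ω}

theorem measureReal_abs_ge_le_of_hasSubgaussianMGF {X : Ω → ℝ} {c : NNReal}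
    (h : HasSubgaussianMGF X c μ) {t : ℝ} (ht : 0 ≤ t) :
    μ.real {ω | t ≤ |X ω|} ≤ 2 * Real.exp (-t ^ 2 / (2 * c)) := by
  have hsplit : {ω | t ≤ |X ω|} = {ω | t ≤ X ω} ∪ {ω | t ≤ (-X) ω} := by
    ext ω
    exact le_abs (a := t) (b := X ω)
  calc
    μ.real {ω | t ≤ |X ω|} ≤ μ.real {ω | t ≤ X ω} + μ.real {ω | t ≤ (-X) ω} :=
      hsplit ▸ measureReal_union_le _ _
    _ ≤ Real.exp (-t ^ 2 / (2 * c)) + Real.exp (-t ^ 2 / (2 * c)) :=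
      add_le_add (h.measure_ge_le ht) (h.neg.measure_ge_le ht)
    _ = 2 * Real.exp (-t ^ 2 / (2 * c)) := (two_mul _).symm

variable {ι : Type*} [Fintype ι] [IsProbabilityMeasure μ] {X : ι → Ω → ℝ} {a b t : ℝ}

theorem measureReal_abs_sum_sub_integral_ge_le (hmeas : ∀ i, AEMeasurable (X i) μ)
    (hbdd : ∀ i, ∀ᵐ ω ∂μ, X i ω ∈ Set.Icc a b) (hindep : iIndepFun X μ) (ht : 0 ≤ t) :
    μ.real {ω | t ≤ |∑ i, (X i ω - ∫ x, X i x ∂μ)|} ≤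
      2 * Real.exp (-2 * t ^ 2 / (Fintype.card ι * (b - a) ^ 2)) := by
  have hcentered : iIndepFun (fun i ω ↦ X i ω - ∫ x, X i x ∂μ) μ :=
    hindep.comp (fun i x ↦ x - ∫ x, X i x ∂μ) fun _ ↦ measurable_id.sub_const _
  have hsum := HasSubgaussianMGF.sum_of_iIndepFun hcentered (s := Finset.univ)
    fun i _ ↦ hasSubgaussianMGF_of_mem_Icc (hmeas i) (hbdd i)
  have hvar : 2 * ((∑ _ : ι, (‖b - a‖₊ / 2) ^ 2 : NNReal) : ℝ) =
      Fintype.card ι * (b - a) ^ 2 / 2 := by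
    simp only [Finset.sum_const, Finset.card_univ, nsmul_eq_mul, div_pow, NNReal.coe_mul,
      NNReal.coe_natCast, NNReal.coe_div, NNReal.coe_pow, coe_nnnorm, Real.norm_eq_abs, sq_abs,
      NNReal.coe_ofNat]
    ring
  convert measureReal_abs_ge_le_of_hasSubgaussianMGF hsum ht using 3
  rw [hvar, div_div_eq_mul_div]
  ring

theorem measureReal_abs_mean_sub_ge_le [Nonempty ι] {r : ℝ} (hmeas : ∀ i, AEMeasurable (X i) μ)
    (hbdd : ∀ i, ∀ᵐ ω ∂μ, X i ω ∈ Set.Icc a b) (hmean : ∀ i, ∫ ω, X i ω ∂μ = r)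
    (hindep : iIndepFun X μ) (ht : 0 ≤ t) :
    μ.real {ω | t ≤ |(1 / Fintype.card ι : ℝ) * ∑ i, X i ω - r|} ≤
      2 * Real.exp (-2 * Fintype.card ι * t ^ 2 / (b - a) ^ 2) := by
  have hcard : (0 : ℝ) < Fintype.card ι := by exact_mod_cast Fintype.card_pos
  have hdev (ω : Ω) : (1 / Fintype.card ι : ℝ) * ∑ i, X i ω - r =
      (∑ i, (X i ω - ∫ x, X i x ∂μ)) / Fintype.card ι := by
    simp only [hmean, Finset.sum_sub_distrib, Finset.sum_const, Finset.card_univ, nsmul_eq_mul]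
    field_simp
  simp only [hdev, abs_div, abs_of_pos hcard, le_div_iff₀' hcard]
  convert measureReal_abs_sum_sub_integral_ge_le hmeas hbdd hindep
    (mul_nonneg hcard.le ht) using 3
  field_simp

end Hoeffding

theorem pauli_concentration_general {Ω : Type*} [MeasurableSpace Ω] {μ : Measure Ω}
    [IsProbabilityMeasure μ] {σ : Matrix (Fin 2) (Fin 2) ℂ} (hσ : σ.IsHermitian)
    (hσtr : σ.trace = 1) {n : ℕ} (hn : 1 ≤ n) {X : Fin 3 → Fin n → Ω → ℝ}
    (hmeas : ∀ K ℓ, AEMeasurable (X K ℓ) μ) (hbdd : ∀ K ℓ, ∀ᵐ ω ∂μ, X K ℓ ω ∈ Set.Icc (-1) 1)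
    (hmean : ∀ K ℓ, ∫ ω, X K ℓ ω ∂μ = blochVector σ K) (hindep : ∀ K, iIndepFun (X K) μ)
    {ε : ℝ} (hε : 0 ≤ ε) :
    μ {ω | ε < traceNorm (σ - blochMatrix fun K ↦ (1 / n : ℝ) * ∑ ℓ, X K ℓ ω)} ≤
      ENNReal.ofReal (6 * Real.exp (-(n : ℝ) * ε ^ 2 / 6)) := by
  have : Nonempty (Fin n) := ⟨⟨0, hn⟩⟩
  let deviates (K : Fin 3) : Set Ω :=
    {ω | ε / √3 ≤ |(1 / n : ℝ) * ∑ ℓ, X K ℓ ω - blochVector σ K|}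
  have hsubset : {ω | ε < traceNorm (σ - blochMatrix fun K ↦ (1 / n : ℝ) * ∑ ℓ, X K ℓ ω)} ⊆
      ⋃ K, deviates K := by
    intro ω hω
    rw [Set.mem_ofPred_eq, ← blochMatrix_blochVector hσ hσtr, traceNorm_blochMatrix_sub] at hω
    obtain ⟨K, hK⟩ := exists_div_sqrt_card_lt_abs_of_lt_sqrt_sum_sq hε hω
    rw [abs_sub_comm] at hK
    exact Set.mem_iUnion.2 ⟨K, by simpa [deviates] using hK.le⟩
  have htail (K : Fin 3) : μ.real (deviates K) ≤ 2 * Real.exp (-(n : ℝ) * ε ^ 2 / 6) := by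
    convert measureReal_abs_mean_sub_ge_le (hmeas K) (hbdd K) (hmean K) (hindep K)
      (t := ε / √3) (by positivity) using 3
    · simp
    · rw [Fintype.card_fin, div_pow, Real.sq_sqrt zero_le_three]
      ring
  rw [← ofReal_measureReal]
  refine ENNReal.ofReal_le_ofReal ?_
  calc
    _ ≤ μ.real (⋃ K, deviates K) := measureReal_mono hsubset
    _ ≤ ∑ K, μ.real (deviates K) := measureReal_iUnion_fintype_le _
    _ ≤ ∑ _ : Fin 3, 2 * Real.exp (-(n : ℝ) * ε ^ 2 / 6) := Finset.sum_le_sum fun K _ ↦ htail K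
    _ = 6 * Real.exp (-(n : ℝ) * ε ^ 2 / 6) := by
      rw [Fin.sum_const, nsmul_eq_mul, ← mul_assoc]
      norm_num

/-- Pauli operator concentration: the tomographic estimate `σ̂` built from `m = 3n` independent
Pauli measurements satisfies `ℙ(‖σ − σ̂‖₁ > ε) ≤ 6·exp(−mε²/54)`. -/
theorem pauli_concentration
    {Ω : Type*} [MeasurableSpace Ω] (μ : Measure Ω) [IsProbabilityMeasure μ]
    (σ : Matrix (Fin 2) (Fin 2) ℂ) (hσ : σ.PosSemidef) (hσtr : σ.trace = 1)
    (n : ℕ) (hn : 1 ≤ n) (m : ℕ) (hm : m = 3 * n)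
    (X : Fin 3 → Fin n → Ω → ℝ)
    (hmeas : ∀ K ℓ, Measurable (X K ℓ))
    (hbdd : ∀ K ℓ ω, X K ℓ ω ∈ Set.Icc (-1 : ℝ) 1)
    (hmean : ∀ K ℓ, ∫ ω, X K ℓ ω ∂μ = ((pauli K) * σ).trace.re)
    (hident : ∀ K ℓ ℓ', IdentDistrib (X K ℓ) (X K ℓ') μ μ)
    (hindep : iIndepFun (fun p : Fin 3 × Fin n => X p.1 p.2) μ)
    (rhat : Fin 3 → Ω → ℝ) (hrhat : ∀ K ω, rhat K ω = (1 / n : ℝ) * ∑ ℓ, X K ℓ ω)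
    (sigmahat : Ω → Matrix (Fin 2) (Fin 2) ℂ)
    (hsig : ∀ ω, sigmahat ω = (1 / 2 : ℂ) • (1 + ∑ K, (rhat K ω : ℂ) • pauli K)) :
    ∀ ε > (0 : ℝ), μ {ω | traceNorm (σ - sigmahat ω) > ε} ≤
      ENNReal.ofReal (6 * Real.exp (-(m : ℝ) * ε ^ 2 / 54)) := by
  intro ε hε
  simp only [hsig, hrhat, hm, gt_iff_lt]
  refine (pauli_concentration_general hσ.isHermitian hσtr hn (fun K ℓ ↦ (hmeas K ℓ).aemeasurable)
    (fun K ℓ ↦ .of_forall (hbdd K ℓ)) hmean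
    (fun K ↦ hindep.precomp (g := Prod.mk K) (Prod.mk_right_injective K)) hε.le).trans ?_
  push_cast
  gcongr ENNReal.ofReal (6 * Real.exp ?_)
  nlinarith [show (0 : ℝ) ≤ n * ε ^ 2 by positivity]
end
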